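/- Let K be an algebraically closed field of characteristic 0, let ζ ∈ K be a primitive cube root of unity, let b, d, g ∈ K be nonzero with b·d·g ∉ {−1, 8}, and let F_{b,d,g} : K³ → K³ be the polynomial map F_{b,d,g}(X,Y,Z) = (X² + bYZ, Z² + dXY, Y² + gXZ). Then: (i) if d ≠ g, Aut(F_{b,d,g}) is exactly the cyclic subgroup of PGL₃(K) of order 3 generated by the class [diag(1, ζ, ζ²)]; (ii) if d = g, Aut(F_{b,d,g}) is exactly the subgroup of order 6 generated by [diag(1, ζ, ζ²)] and the class of the permutation matrix exchanging the second and third standard basis vectors, a group isomorphic to S₃; (iii) for b', d', g' ∈ K nonzero with b'·d'·g' ∉ {−1, 8}, the triples F_{b,d,g} and F_{b',d',g'} are PGL₃(K)-conjugate if and only if (b',d',g') = (b,d,g) or (b',d',g') = (b,g,d). -/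

import Mathlib

open Matrix MvPolynomial
open scoped Classical

noncomputable section

/-- `PGL₃(K)`: the quotient of `GL₃(K)` by its center (the nonzero scalar matrices). -/
abbrev PGL3 (K : Type*) [Field K] : Type _ :=
  GL (Fin 3) K ⧸ Subgroup.center (GL (Fin 3) K)

/-- The class in `PGL₃(K)` of a matrix (sent to `1` if the matrix is not invertible). -/
def toPGL3 {K : Type*} [Field K] (M : Matrix (Fin 3) (Fin 3) K) : PGL3 K :=
  if h : M.det ≠ 0 then
    QuotientGroup.mk (Matrix.GeneralLinearGroup.mkOfDetNeZero M h) else 1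

/-- The automorphism group (as a set of classes in `PGL₃(K)`) of a polynomial self-map
`F` of `K³`: the classes `[M]` such that `F(M·v) = c·M·F(v)` for some `c ≠ 0` and all `v`. -/
def AutQ {K : Type*} [Field K] (F : (Fin 3 → K) → (Fin 3 → K)) : Set (PGL3 K) :=
  {φ | ∃ M : GL (Fin 3) K, (QuotientGroup.mk M : PGL3 K) = φ ∧
    ∃ c : K, c ≠ 0 ∧ ∀ v : Fin 3 → K,
      F ((M : Matrix (Fin 3) (Fin 3) K) *ᵥ v) = c • ((M : Matrix (Fin 3) (Fin 3) K) *ᵥ F v)}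

/-- Two polynomial self-maps of `K³` are `PGL₃(K)`-conjugate. -/
def PGLConj {K : Type*} [Field K] (F F' : (Fin 3 → K) → (Fin 3 → K)) : Prop :=
  ∃ (M : Matrix (Fin 3) (Fin 3) K) (c : K), M.det ≠ 0 ∧ c ≠ 0 ∧
    ∀ v : Fin 3 → K, F (M *ᵥ v) = c • (M *ᵥ F' v)

/-- The `n`-fold composite of the polynomial self-map of `K³` whose coordinates are the
polynomials `P 0, P 1, P 2`, as a triple of polynomials (the `0`-th iterate is the identity). -/
def iterComp {K : Type*} [CommSemiring K] (P : Fin 3 → MvPolynomial (Fin 3) K) :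
    ℕ → Fin 3 → MvPolynomial (Fin 3) K
  | 0 => fun i => MvPolynomial.X i
  | n + 1 => fun i => MvPolynomial.aeval (iterComp P n) (P i)

/-! A linear map `M` conjugating `F_{b',d',g'}` to `F_{b,d,g}` intertwines the Jacobians:
`M J'_v = J_{Mv} M`. Hence `M` preserves, up to nonzero scalars, everything built naturally
from the Jacobian: the linear form `tr J_v`, the quadratic form `tr (J_v²)`, and the contractions of
`J_u v` and `J_u J_v` with the dual of that form. Each of these determines a multiple of the
coordinate form `X`, and if `bdg ≠ -1, 8` then one of the multiples is nonzero. So `M` preserves `X`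
up to a scalar, and evaluating the conjugacy at a few vectors leaves only `diag(1, ω, ω²)` with
`ω³ = 1`, possibly composed with the exchange of `Y` and `Z`, which also exchanges `d` and `g`. On
classes this exchange inverts `diag(1, ω, ω²)`, so for `d = g` the group is dihedral. -/

section Dihedral

variable {G : Type*} [Group G] {n : ℕ} {x y : G}

theorem zpow_intCast_cast (hx : x ^ n = 1) (k : ℤ) : x ^ ((k : ZMod n).cast : ℤ) = x ^ k := by
  rw [zpow_eq_zpow_iff_modEq]
  refine Int.ModEq.of_dvd (Int.natCast_dvd_natCast.2 (orderOf_dvd_of_pow_eq_one hx)) ?_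
  rw [← ZMod.intCast_eq_intCast_iff, ZMod.intCast_zmod_cast]

/-- The homomorphism from `DihedralGroup n` (infinite if `n = 0`) determined by elements `x` and `y`
which satisfy the relations of its generators `r 1` and `sr 0`. -/
def dihedralLift (hx : x ^ n = 1) (hy : y * y = 1) (hyx : SemiconjBy y x x⁻¹) :
    DihedralGroup n →* G :=
  MonoidHom.mk' (fun
    | .r i => x ^ (i.cast : ℤ)
    | .sr i => y * x ^ (i.cast : ℤ)) <| by
    have conj (k : ℤ) : x ^ k * y = y * x ^ (-k) := by simpa using (hyx.zpow_right (-k)).eq.symm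
    rintro (i | i) (j | j) <;> obtain ⟨i, rfl⟩ := ZMod.intCast_surjective i <;>
      obtain ⟨j, rfl⟩ := ZMod.intCast_surjective j
    · simp only [DihedralGroup.r_mul_r, ← Int.cast_add, zpow_intCast_cast hx, _root_.zpow_add]
    · simp only [DihedralGroup.r_mul_sr, ← Int.cast_sub, zpow_intCast_cast hx]
      rw [← mul_assoc, conj, mul_assoc, ← _root_.zpow_add, neg_add_eq_sub]
    · simp only [DihedralGroup.sr_mul_r, ← Int.cast_add, zpow_intCast_cast hx, _root_.zpow_add,
        mul_assoc]
    · simp only [DihedralGroup.sr_mul_sr, ← Int.cast_sub, zpow_intCast_cast hx]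
      rw [mul_assoc, ← mul_assoc (x ^ i), conj, mul_assoc, ← _root_.zpow_add, ← mul_assoc, hy,
        one_mul, neg_add_eq_sub]

theorem dihedralLift_r (hx : x ^ n = 1) (hy : y * y = 1) (hyx : SemiconjBy y x x⁻¹) (k : ℤ) :
    dihedralLift hx hy hyx (.r k) = x ^ k :=
  zpow_intCast_cast hx k

theorem dihedralLift_sr (hx : x ^ n = 1) (hy : y * y = 1) (hyx : SemiconjBy y x x⁻¹) (k : ℤ) :
    dihedralLift hx hy hyx (.sr k) = y * x ^ k :=
  congrArg (y * ·) (zpow_intCast_cast hx k)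

theorem range_dihedralLift (hx : x ^ n = 1) (hy : y * y = 1) (hyx : SemiconjBy y x x⁻¹) :
    (dihedralLift hx hy hyx).range = Subgroup.closure {x, y} := by
  have hx_mem : x ∈ Subgroup.closure {x, y} := Subgroup.subset_closure (by simp)
  have hy_mem : y ∈ Subgroup.closure {x, y} := Subgroup.subset_closure (by simp)
  apply le_antisymm
  · rintro _ ⟨z, rfl⟩
    rcases z with i | i <;> obtain ⟨k, rfl⟩ := ZMod.intCast_surjective i
    · rw [dihedralLift_r]
      exact zpow_mem hx_mem k
    · rw [dihedralLift_sr]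
      exact mul_mem hy_mem (zpow_mem hx_mem k)
  · rw [Subgroup.closure_le]
    rintro _ (rfl | rfl)
    · exact ⟨.r (1 : ℤ), by rw [dihedralLift_r, zpow_one]⟩
    · exact ⟨.sr (0 : ℤ), by rw [dihedralLift_sr, zpow_zero, mul_one]⟩

theorem mem_closure_pair_iff_of_dihedral (hy : y * y = 1) (hyx : SemiconjBy y x x⁻¹) {z : G} :
    z ∈ Subgroup.closure {x, y} ↔ z ∈ Subgroup.zpowers x ∨ y * z ∈ Subgroup.zpowers x := by
  rw [← range_dihedralLift (pow_orderOf_eq_one x) hy hyx]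
  constructor
  · rintro ⟨i | i, rfl⟩ <;> obtain ⟨k, rfl⟩ := ZMod.intCast_surjective i
    · exact .inl ⟨k, (dihedralLift_r ..).symm⟩
    · exact .inr ⟨k, by simp only [dihedralLift_sr, ← mul_assoc, hy, one_mul]⟩
  · rintro (⟨k, rfl⟩ | ⟨k, hk⟩)
    · exact ⟨.r k, dihedralLift_r ..⟩
    · exact ⟨.sr k, by simp only [dihedralLift_sr, hk, ← mul_assoc, hy, one_mul]⟩

theorem notMem_zpowers_of_semiconjBy_inv (hx : ¬ orderOf x ∣ 2) (hyx : SemiconjBy y x x⁻¹) :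
    y ∉ Subgroup.zpowers x := by
  rintro ⟨k, rfl⟩
  refine hx (orderOf_dvd_of_pow_eq_one ?_)
  have hxx : x⁻¹ = x := mul_right_cancel (hyx.eq.symm.trans ((Commute.refl x).zpow_left k).eq)
  rw [sq, ← inv_eq_iff_mul_eq_one, hxx]

theorem dihedralLift_injective (hx : orderOf x = n) (hn : ¬ n ∣ 2) (hy : y * y = 1)
    (hyx : SemiconjBy y x x⁻¹) :
    Function.Injective (dihedralLift (orderOf_dvd_iff_pow_eq_one.1 hx.dvd) hy hyx) := by
  subst hx
  rw [injective_iff_map_eq_one]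
  rintro (i | i) h <;> obtain ⟨k, rfl⟩ := ZMod.intCast_surjective i
  · rw [dihedralLift_r, ← orderOf_dvd_iff_zpow_eq_one, ← ZMod.intCast_zmod_eq_zero_iff_dvd] at h
    rw [h, DihedralGroup.r_zero]
  · rw [dihedralLift_sr, mul_eq_one_iff_eq_inv] at h
    exact absurd (h ▸ inv_mem (zpow_mem (Subgroup.mem_zpowers x) k))
      (notMem_zpowers_of_semiconjBy_inv hn hyx)

/-- The isomorphism of `DihedralGroup n` with the subgroup generated by an element `x` of order `n`
and an element `y` with `y * y = 1` that inverts `x`. -/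
def dihedralMulEquivClosure (hx : orderOf x = n) (hn : ¬ n ∣ 2) (hy : y * y = 1)
    (hyx : SemiconjBy y x x⁻¹) : DihedralGroup n ≃* Subgroup.closure {x, y} :=
  (MonoidHom.ofInjective (dihedralLift_injective hx hn hy hyx)).trans
    (MulEquiv.subgroupCongr (range_dihedralLift _ hy hyx))

/-- The isomorphism of the dihedral group of order 6 with the symmetric group on three letters,
sending the generators to a 3-cycle and a transposition. -/
def dihedralMulEquivPerm : DihedralGroup 3 ≃* Equiv.Perm (Fin 3) :=
  have order : orderOf (finRotate 3) = 3 := by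
    rw [isCycle_finRotate.orderOf, support_finRotate, Finset.card_univ, Fintype.card_fin]
  have inverts : SemiconjBy (Equiv.swap 0 (finRotate 3 0)) (finRotate 3) (finRotate 3)⁻¹ := by
    unfold SemiconjBy
    decide
  have generate : Subgroup.closure {finRotate 3, Equiv.swap 0 (finRotate 3 0)} = ⊤ :=
    Equiv.Perm.closure_cycle_adjacent_swap isCycle_finRotate support_finRotate 0
  (dihedralMulEquivClosure order (by decide) (Equiv.swap_mul_self _ _) inverts).trans
    ((MulEquiv.subgroupCongr generate).trans Subgroup.topEquiv)

end Dihedral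

section Contraction

variable {n R E E' E'' : Type*} [Fintype n] [DecidableEq n] [CommRing R]
  [AddCommGroup E] [Module R E] [AddCommGroup E'] [Module R E'] [AddCommGroup E''] [Module R E'']

theorem trace_eq_of_semiconjBy {M A B : Matrix n n R} (hM : IsUnit M) (h : SemiconjBy M A B) :
    A.trace = B.trace := by
  rw [← trace_conj hM A, h.eq, mul_nonsing_inv_cancel_right _ _ ((isUnit_iff_isUnit_det M).1 hM)]

theorem mul_adjugate_mul_transpose (M G : Matrix n n R) :
    M * adjugate (Mᵀ * G * M) * Mᵀ = M.det ^ 2 • adjugate G := by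
  calc M * adjugate (Mᵀ * G * M) * Mᵀ
      = (M * adjugate M) * adjugate G * (M * adjugate M)ᵀ := by
        simp only [adjugate_mul_distrib, transpose_mul, adjugate_transpose, Matrix.mul_assoc]
    _ = M.det ^ 2 • adjugate G := by
        rw [mul_adjugate, transpose_smul, transpose_one, Matrix.smul_mul, Matrix.one_mul,
          Matrix.mul_smul, Matrix.mul_one, smul_smul, sq]

/-- The contraction `∑ Hⁱʲ B(eᵢ, eⱼ)` of a contravariant 2-tensor `H` on `Rⁿ`, given by its matrix,
with a bilinear map `B` on `Rⁿ`. -/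
def bilinContraction (H : Matrix n n R) (B : (n → R) →ₗ[R] (n → R) →ₗ[R] E) : E :=
  ∑ i, ∑ j, H i j • B (Pi.single i 1) (Pi.single j 1)

theorem bilinContraction_smul (r : R) (H : Matrix n n R)
    (B : (n → R) →ₗ[R] (n → R) →ₗ[R] E) :
    bilinContraction (r • H) B = r • bilinContraction H B := by
  simp only [bilinContraction, Matrix.smul_apply, smul_assoc, Finset.smul_sum]

theorem map_bilinContraction_eq {f : E →ₗ[R] E''} {g : E' →ₗ[R] E''}
    {B : (n → R) →ₗ[R] (n → R) →ₗ[R] E} {B' : (n → R) →ₗ[R] (n → R) →ₗ[R] E'}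
    (h : ∀ u v, f (B u v) = g (B' u v)) (H : Matrix n n R) :
    f (bilinContraction H B) = g (bilinContraction H B') := by
  simp only [bilinContraction, map_sum, map_smul, h]

theorem bilinContraction_compl₁₂_mulVecLin (M H : Matrix n n R)
    (B : (n → R) →ₗ[R] (n → R) →ₗ[R] E) :
    bilinContraction H (B.compl₁₂ M.mulVecLin M.mulVecLin) = bilinContraction (M * H * Mᵀ) B := by
  have mulVec_single (i : n) : M *ᵥ Pi.single i 1 = ∑ k, M k i • Pi.single k (1 : R) := by
    rw [mulVec_single_one]
    exact pi_eq_sum_univ' (M.col i)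
  calc bilinContraction H (B.compl₁₂ M.mulVecLin M.mulVecLin)
      = ∑ i, ∑ j, ∑ k, ∑ l, (M k i * H i j * M l j) • B (Pi.single k 1) (Pi.single l 1) := by
        simp only [bilinContraction, LinearMap.compl₁₂_apply, mulVecLin_apply, mulVec_single,
          map_sum, map_smul, LinearMap.sum_apply, LinearMap.smul_apply, Finset.smul_sum, smul_smul]
        refine Finset.sum_congr rfl fun i _ => Finset.sum_congr rfl fun j _ => ?_
        rw [Finset.sum_comm]
        simp only [mul_left_comm, mul_comm]
    _ = ∑ k, ∑ l, ∑ j, ∑ i, (M k i * H i j * M l j) • B (Pi.single k 1) (Pi.single l 1) := by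
        rw [Finset.sum_comm_cycle]
        refine Finset.sum_congr rfl fun k _ => ?_
        rw [Finset.sum_comm_cycle]
        exact Finset.sum_congr rfl fun l _ => Finset.sum_comm
    _ = bilinContraction (M * H * Mᵀ) B := by
        simp only [bilinContraction, Matrix.mul_apply, transpose_apply, Finset.sum_mul,
          Finset.sum_smul]

theorem bilinContraction_adjugate_compl₁₂_mulVecLin (M G : Matrix n n R)
    (B : (n → R) →ₗ[R] (n → R) →ₗ[R] E) :
    bilinContraction (adjugate (Mᵀ * G * M)) (B.compl₁₂ M.mulVecLin M.mulVecLin) =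
      M.det ^ 2 • bilinContraction (adjugate G) B := by
  rw [bilinContraction_compl₁₂_mulVecLin, mul_adjugate_mul_transpose, bilinContraction_smul]

end Contraction

section QuadMap

variable {R : Type*} [CommRing R]

/-- The quadratic map `F_{b,d,g}(X, Y, Z) = (X² + bYZ, Z² + dXY, Y² + gXZ)`. -/
def quadMap (b d g : R) (v : Fin 3 → R) : Fin 3 → R :=
  ![v 0 ^ 2 + b * (v 1 * v 2), v 2 ^ 2 + d * (v 0 * v 1), v 1 ^ 2 + g * (v 0 * v 2)]

/-- The Jacobian matrix of `quadMap b d g` at `v`, which is linear in `v`. -/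
def jacobian (b d g : R) : (Fin 3 → R) →ₗ[R] Matrix (Fin 3) (Fin 3) R where
  toFun v := !![2 * v 0, b * v 2, b * v 1; d * v 1, d * v 0, 2 * v 2; g * v 2, 2 * v 1, g * v 0]
  map_add' u v := by
    ext i j
    fin_cases i <;> fin_cases j <;> simp [mul_add]
  map_smul' r v := by
    ext i j
    fin_cases i <;> fin_cases j <;> simp [mul_left_comm]

variable {b d g b' d' g' : R} {M : Matrix (Fin 3) (Fin 3) R}

theorem jacobian_apply (b d g : R) (v : Fin 3 → R) : jacobian b d g v =
    !![2 * v 0, b * v 2, b * v 1; d * v 1, d * v 0, 2 * v 2; g * v 2, 2 * v 1, g * v 0] :=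
  rfl

theorem jacobian_mulVec (b d g : R) (u v : Fin 3 → R) :
    jacobian b d g u *ᵥ v = quadMap b d g (u + v) - quadMap b d g u - quadMap b d g v := by
  ext i
  fin_cases i <;> simp [jacobian_apply, quadMap, mulVec, dotProduct, Fin.sum_univ_three] <;> ring

theorem semiconjBy_jacobian
    (h : Function.Semiconj (M *ᵥ ·) (quadMap b' d' g') (quadMap b d g)) (v : Fin 3 → R) :
    SemiconjBy M (jacobian b' d' g' v) (jacobian b d g (M *ᵥ v)) := by
  refine ext_of_mulVec_single fun i => ?_
  simp only [← mulVec_mulVec, jacobian_mulVec, mulVec_sub, ← mulVec_add, h.eq]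

theorem trace_jacobian (b d g : R) (v : Fin 3 → R) :
    (jacobian b d g v).trace = (2 + d + g) * v 0 := by
  simp only [jacobian_apply, trace_fin_three_of]
  ring

/-- The Gram matrix of the trace form `(u, v) ↦ tr (J_u J_v)` of the Jacobian of
`quadMap b d g`. -/
def traceForm (b d g : R) : Matrix (Fin 3) (Fin 3) R :=
  !![4 + d ^ 2 + g ^ 2, 0, 0; 0, 0, 4 + b * (d + g); 0, 4 + b * (d + g), 0]

theorem trace_jacobian_mul_jacobian (b d g : R) (u v : Fin 3 → R) :
    (jacobian b d g u * jacobian b d g v).trace = u ⬝ᵥ traceForm b d g *ᵥ v := by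
  simp [jacobian_apply, traceForm, trace_fin_three, Fin.sum_univ_three, mulVec,
    dotProduct]
  ring

theorem traceForm_mulVec_dotProduct (hM : IsUnit M)
    (h : Function.Semiconj (M *ᵥ ·) (quadMap b' d' g') (quadMap b d g)) (u v : Fin 3 → R) :
    M *ᵥ u ⬝ᵥ traceForm b d g *ᵥ (M *ᵥ v) = u ⬝ᵥ traceForm b' d' g' *ᵥ v := by
  rw [← trace_jacobian_mul_jacobian, ← trace_jacobian_mul_jacobian]
  exact (trace_eq_of_semiconjBy hM
    ((semiconjBy_jacobian h u).mul_right (semiconjBy_jacobian h v))).symm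

theorem transpose_mul_traceForm_mul (hM : IsUnit M)
    (h : Function.Semiconj (M *ᵥ ·) (quadMap b' d' g') (quadMap b d g)) :
    Mᵀ * traceForm b d g * M = traceForm b' d' g' := by
  ext i j
  calc (Mᵀ * traceForm b d g * M) i j
      = Pi.single i 1 ⬝ᵥ (Mᵀ * traceForm b d g * M) *ᵥ Pi.single j 1 := by simp
    _ = M *ᵥ Pi.single i 1 ⬝ᵥ traceForm b d g *ᵥ (M *ᵥ Pi.single j 1) := by
        rw [← mulVec_mulVec, ← mulVec_mulVec, dotProduct_mulVec, vecMul_transpose]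
    _ = traceForm b' d' g' i j := by
        rw [traceForm_mulVec_dotProduct hM h]
        simp

theorem adjugate_traceForm (b d g : R) : adjugate (traceForm b d g) =
    -(4 + b * (d + g)) • !![4 + b * (d + g), 0, 0; 0, 0, 4 + d ^ 2 + g ^ 2;
      0, 4 + d ^ 2 + g ^ 2, 0] := by
  rw [traceForm, adjugate_fin_three_of]
  ext i j
  fin_cases i <;> fin_cases j <;> simp <;> ring

end QuadMap

section Invariants

variable {R : Type*} [CommRing R] {b d g b' d' g' : R} {M : Matrix (Fin 3) (Fin 3) R}

/-- The contraction of `(u, v) ↦ J_u v` with the form dual to `traceForm b d g`, up to a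
determinant: a vector that conjugacies preserve up to a scalar. -/
def contractedVec (b d g : R) : Fin 3 → R :=
  bilinContraction (adjugate (traceForm b d g)) (mulVecBilin R R ∘ₗ jacobian b d g)

/-- The contraction of `(u, v) ↦ J_u J_v` with the form dual to `traceForm b d g`, up to a
determinant: an endomorphism that conjugacies preserve up to a scalar. -/
def contractedMatrix (b d g : R) : Matrix (Fin 3) (Fin 3) R :=
  bilinContraction (adjugate (traceForm b d g))
    ((LinearMap.mul R _).compl₁₂ (jacobian b d g) (jacobian b d g))

theorem mulVec_contractedVec (hM : IsUnit M)
    (h : Function.Semiconj (M *ᵥ ·) (quadMap b' d' g') (quadMap b d g)) :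
    M *ᵥ contractedVec b' d' g' = M.det ^ 2 • contractedVec b d g := by
  rw [contractedVec, contractedVec, ← bilinContraction_adjugate_compl₁₂_mulVecLin,
    transpose_mul_traceForm_mul hM h]
  refine map_bilinContraction_eq (f := M.mulVecLin) (g := LinearMap.id) (fun u v => ?_) _
  simp [(semiconjBy_jacobian h u).eq]

theorem semiconjBy_contractedMatrix (hM : IsUnit M)
    (h : Function.Semiconj (M *ᵥ ·) (quadMap b' d' g') (quadMap b d g)) :
    SemiconjBy M (contractedMatrix b' d' g') (M.det ^ 2 • contractedMatrix b d g) := by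
  rw [contractedMatrix, contractedMatrix, ← bilinContraction_adjugate_compl₁₂_mulVecLin,
    transpose_mul_traceForm_mul hM h]
  refine map_bilinContraction_eq (f := LinearMap.mulLeft R M) (g := LinearMap.mulRight R M)
    (fun u v => ?_) _
  exact ((semiconjBy_jacobian h u).mul_right (semiconjBy_jacobian h v)).eq

theorem contractedVec_eq (b d g : R) : contractedVec b d g =
    (-2 * (4 + b * (d + g)) * (4 + b * (d + g) + b * (4 + d ^ 2 + g ^ 2))) • Pi.single 0 1 := by
  rw [contractedVec, adjugate_traceForm, bilinContraction_smul]
  ext i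
  fin_cases i <;> simp [bilinContraction, jacobian_apply, Fin.sum_univ_three]
  ring

theorem trace_jacobian_mul_contractedMatrix (b d g : R) (v : Fin 3 → R) :
    (jacobian b d g v * contractedMatrix b d g).trace =
      -(4 + b * (d + g)) * ((4 + b * (d + g)) * (8 + d ^ 3 + g ^ 3) + (4 + d ^ 2 + g ^ 2) *
        (2 * b * (d + g) + b * (d ^ 2 + g ^ 2) + 4 * (d + g))) * v 0 := by
  rw [contractedMatrix, adjugate_traceForm, bilinContraction_smul]
  simp [bilinContraction, jacobian_apply, Fin.sum_univ_three, trace_fin_three]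
  ring

end Invariants

section FirstRow

variable {K : Type*} [Field K] {b d g b' d' g' : K} {M : Matrix (Fin 3) (Fin 3) K}

theorem apply_zero_eq_zero_of_mul_mulVec_eq {k k' : K} (hk : k ≠ 0)
    (h : ∀ v, k * (M *ᵥ v) 0 = k' * v 0) : M 0 1 = 0 ∧ M 0 2 = 0 := by
  have entry (i : Fin 3) (hi : i ≠ 0) : M 0 i = 0 := by
    simpa [hk, hi] using h (Pi.single i 1)
  exact ⟨entry 1 (by decide), entry 2 (by decide)⟩

theorem apply_zero_eq_zero_of_trace_ne_zero (hM : IsUnit M)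
    (h : Function.Semiconj (M *ᵥ ·) (quadMap b' d' g') (quadMap b d g))
    (htr : 2 + d + g ≠ 0) : M 0 1 = 0 ∧ M 0 2 = 0 := by
  refine apply_zero_eq_zero_of_mul_mulVec_eq (k' := 2 + d' + g') htr fun v => ?_
  rw [← trace_jacobian, ← trace_jacobian, trace_eq_of_semiconjBy hM (semiconjBy_jacobian h v)]

theorem apply_zero_eq_zero_of_traceForm (hM : IsUnit M)
    (h : Function.Semiconj (M *ᵥ ·) (quadMap b' d' g') (quadMap b d g))
    (hα : 4 + d ^ 2 + g ^ 2 ≠ 0) (hβ : 4 + b * (d + g) = 0) : M 0 1 = 0 ∧ M 0 2 = 0 := by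
  have entry (i : Fin 3) (hi : traceForm b' d' g' i i = 0) : M 0 i = 0 := by
    have isotropic := traceForm_mulVec_dotProduct hM h (Pi.single i 1) (Pi.single i 1)
    rw [mulVec_single_one, mulVec_single_one, single_one_dotProduct, col_apply, hi] at isotropic
    simpa [traceForm, hβ, hα, dotProduct, Fin.sum_univ_three] using isotropic
  exact ⟨entry 1 rfl, entry 2 rfl⟩

theorem apply_zero_eq_zero_of_contractedVec (hM : IsUnit M)
    (h : Function.Semiconj (M *ᵥ ·) (quadMap b' d' g') (quadMap b d g)) {r r' : K}
    (hw : contractedVec b d g = r • Pi.single 0 1)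
    (hw' : contractedVec b' d' g' = r' • Pi.single 0 1)
    (hr : r ≠ 0) (hα : 4 + d ^ 2 + g ^ 2 ≠ 0) : M 0 1 = 0 ∧ M 0 2 = 0 := by
  have hdet : M.det ≠ 0 := ((isUnit_iff_isUnit_det M).1 hM).ne_zero
  have traceForm_single (b d g : K) (v : Fin 3 → K) :
      Pi.single 0 1 ⬝ᵥ traceForm b d g *ᵥ v = (4 + d ^ 2 + g ^ 2) * v 0 := by
    simp [traceForm, mulVec, dotProduct, Fin.sum_univ_three]
  refine apply_zero_eq_zero_of_mul_mulVec_eq (k' := r' * (4 + d' ^ 2 + g' ^ 2))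
    (mul_ne_zero (mul_ne_zero (pow_ne_zero 2 hdet) hr) hα) fun v => ?_
  have invariance := traceForm_mulVec_dotProduct hM h (contractedVec b' d' g') v
  rw [mulVec_contractedVec hM h, hw, hw'] at invariance
  simpa only [smul_dotProduct, traceForm_single, smul_eq_mul, mul_assoc] using invariance

theorem apply_zero_eq_zero_of_contractedMatrix (hM : IsUnit M)
    (h : Function.Semiconj (M *ᵥ ·) (quadMap b' d' g') (quadMap b d g)) {r r' : K}
    (hR : ∀ v, (jacobian b d g v * contractedMatrix b d g).trace = r * v 0)
    (hR' : ∀ v, (jacobian b' d' g' v * contractedMatrix b' d' g').trace = r' * v 0)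
    (hr : r ≠ 0) : M 0 1 = 0 ∧ M 0 2 = 0 := by
  have hdet : M.det ≠ 0 := ((isUnit_iff_isUnit_det M).1 hM).ne_zero
  refine apply_zero_eq_zero_of_mul_mulVec_eq (k' := r')
    (mul_ne_zero (pow_ne_zero 2 hdet) hr) fun v => ?_
  have invariance := trace_eq_of_semiconjBy hM
    ((semiconjBy_jacobian h v).mul_right (semiconjBy_contractedMatrix hM h))
  rw [← hR', invariance, Matrix.mul_smul, trace_smul, hR, smul_eq_mul, mul_assoc]

theorem ne_zero_of_trace_jacobian_mul_contractedMatrix_eq_zero [NeZero (2 : K)] [NeZero (3 : K)]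
    (ht₁ : b * d * g ≠ -1) (htr : 2 + d + g = 0) (hβ : 4 + b * (d + g) ≠ 0)
    (hκ : (4 + b * (d + g)) * (8 + d ^ 3 + g ^ 3) + (4 + d ^ 2 + g ^ 2) *
      (2 * b * (d + g) + b * (d ^ 2 + g ^ 2) + 4 * (d + g)) = 0) :
    4 + b * (d + g) + b * (4 + d ^ 2 + g ^ 2) ≠ 0 ∧ 4 + d ^ 2 + g ^ 2 ≠ 0 := by
  have h2 : (2 : K) ≠ 0 := NeZero.ne 2
  have h12 : (2 ^ 2 * 3 : K) ≠ 0 := mul_ne_zero (pow_ne_zero 2 h2) (NeZero.ne 3)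
  obtain rfl : g = -2 - d := by linear_combination htr
  -- Once `d + g = -2`, all the expressions depend on `d` and `g` only through `s = d * g`.
  obtain ⟨s, hs⟩ : ∃ s, s = d * (-2 - d) := ⟨_, rfl⟩
  have hα' : 4 + d ^ 2 + (-2 - d) ^ 2 = 2 * (4 - s) := by rw [hs]; ring
  have hβ' : 4 + b * (d + (-2 - d)) = 2 * (2 - b) := by ring
  have hκ' : b * s ^ 2 - 7 * b * s + 10 * s - 16 = 0 := by
    refine mul_left_cancel₀ (pow_ne_zero 2 h2) ?_
    rw [hs]
    linear_combination hκ
  rw [mul_assoc, ← hs] at ht₁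
  rw [hβ'] at hβ
  rw [hα', hβ']
  constructor
  · intro hγ
    have hbs : b * s = 3 * b + 2 := mul_left_cancel₀ h2 (by linear_combination -hγ)
    have hsb : s = b + 2 := mul_left_cancel₀ h12 (by linear_combination hκ' - (s - 4) * hbs)
    have hroots : (2 - b) * (b + 1) = 0 := by linear_combination b * hsb - hbs
    rcases mul_eq_zero.1 hroots with hb | hb
    · exact hβ (by rw [hb, mul_zero])
    · exact ht₁ (by linear_combination b * hsb + (b + 1) * hb)
  · intro hα
    have hs4 : s = 4 := mul_left_cancel₀ h2 (by linear_combination -hα)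
    refine mul_ne_zero hβ h12 ?_
    subst hs4
    linear_combination 2 * hκ'

theorem apply_zero_eq_zero_of_semiconj [NeZero (2 : K)] [NeZero (3 : K)] (hM : IsUnit M)
    (h : Function.Semiconj (M *ᵥ ·) (quadMap b' d' g') (quadMap b d g))
    (ht₁ : b * d * g ≠ -1) (ht₈ : b * d * g ≠ 8) : M 0 1 = 0 ∧ M 0 2 = 0 := by
  by_cases htr : 2 + d + g = 0
  swap
  · exact apply_zero_eq_zero_of_trace_ne_zero hM h htr
  by_cases hβ : 4 + b * (d + g) = 0
  · refine apply_zero_eq_zero_of_traceForm hM h (fun hα => ht₈ ?_) hβ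
    have hb : b = 2 := mul_left_cancel₀ (NeZero.ne (2 : K)) (by linear_combination b * htr - hβ)
    subst hb
    linear_combination (d + g - 2) * htr - hα
  by_cases hκ : (4 + b * (d + g)) * (8 + d ^ 3 + g ^ 3) + (4 + d ^ 2 + g ^ 2) *
      (2 * b * (d + g) + b * (d ^ 2 + g ^ 2) + 4 * (d + g)) = 0
  · obtain ⟨hγ, hα⟩ := ne_zero_of_trace_jacobian_mul_contractedMatrix_eq_zero ht₁ htr hβ hκ
    exact apply_zero_eq_zero_of_contractedVec hM h (contractedVec_eq b d g)
      (contractedVec_eq b' d' g') (mul_ne_zero (mul_ne_zero (neg_ne_zero.2 (NeZero.ne 2)) hβ) hγ) hα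
  · exact apply_zero_eq_zero_of_contractedMatrix hM h
      (trace_jacobian_mul_contractedMatrix b d g) (trace_jacobian_mul_contractedMatrix b' d' g')
      (mul_ne_zero (neg_ne_zero.2 hβ) hκ)

end FirstRow

section Classification

variable {R : Type*} [CommRing R]

/-- The permutation matrix exchanging the second and third standard basis vectors. -/
def swapMatrix (R : Type*) [CommRing R] : Matrix (Fin 3) (Fin 3) R :=
  !![1, 0, 0; 0, 0, 1; 0, 1, 0]

theorem swapMatrix_mulVec (v : Fin 3 → R) : swapMatrix R *ᵥ v = ![v 0, v 2, v 1] := by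
  ext i
  fin_cases i <;> simp [swapMatrix, vecHead, vecTail]

theorem swapMatrix_mul_self : swapMatrix R * swapMatrix R = 1 := by
  ext i j
  fin_cases i <;> fin_cases j <;> simp [swapMatrix]

theorem isUnit_swapMatrix : IsUnit (swapMatrix R) :=
  IsUnit.of_mul_eq_one _ swapMatrix_mul_self

theorem diagonal_mul_swapMatrix_mul_diagonal {ω : R} (hω : ω ^ 3 = 1) :
    diagonal ![1, ω, ω ^ 2] * (swapMatrix R * diagonal ![1, ω, ω ^ 2]) = swapMatrix R := by
  ext i j
  rw [diagonal_mul, mul_diagonal]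
  fin_cases i <;> fin_cases j <;> simp [swapMatrix, ← pow_succ, ← pow_succ', hω]

theorem semiconj_mul_mulVec {n : Type*} [Fintype n] {A B : Matrix n n R}
    {f f' f'' : (n → R) → n → R}
    (hA : Function.Semiconj (A *ᵥ ·) f' f'') (hB : Function.Semiconj (B *ᵥ ·) f f') :
    Function.Semiconj ((A * B) *ᵥ ·) f f'' := fun v => by
  simp only [← mulVec_mulVec, hB.eq, hA.eq]

theorem semiconj_swapMatrix (b d g : R) :
    Function.Semiconj (swapMatrix R *ᵥ ·) (quadMap b d g) (quadMap b g d) := fun v => by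
  simp only [quadMap, swapMatrix_mulVec]
  ext i
  fin_cases i <;> simp [mul_comm]

theorem semiconj_diagonal {ω : R} (hω : ω ^ 3 = 1) (b d g : R) :
    Function.Semiconj (diagonal ![1, ω, ω ^ 2] *ᵥ ·) (quadMap b d g) (quadMap b d g) := fun v => by
  ext i
  fin_cases i <;> simp [quadMap, mulVec_diagonal]
  · linear_combination (-b * v 1 * v 2) * hω
  · linear_combination (-ω * v 2 ^ 2) * hω
  · ring

theorem quadMap_smul (b d g c : R) (v : Fin 3 → R) :
    quadMap b d g (c • v) = c ^ 2 • quadMap b d g v := by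
  ext i
  fin_cases i <;> simp [quadMap] <;> ring

variable {K : Type*} [Field K] {b d g b' d' g' : K} {M : Matrix (Fin 3) (Fin 3) K}

theorem apply_mul_apply_eq_zero_of_semiconj
    (h : Function.Semiconj (M *ᵥ ·) (quadMap b' d' g') (quadMap b d g)) (hb : b ≠ 0)
    (h01 : M 0 1 = 0) (h02 : M 0 2 = 0) : M 1 1 * M 2 1 = 0 := by
  have := congrFun (h (Pi.single 1 1)) 0
  simpa [quadMap, mulVec, dotProduct, Fin.sum_univ_three, h01, h02, hb] using this.symm

theorem eq_of_semiconj_diagonal {ω τ ρ : K} (hω : ω ≠ 0) (hτ : τ ≠ 0) (hρ : ρ ≠ 0)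
    (h : Function.Semiconj (diagonal ![τ, ω, ρ] *ᵥ ·) (quadMap b' d' g') (quadMap b d g)) :
    ω ^ 3 = 1 ∧ τ = 1 ∧ ρ = ω ^ 2 ∧ b' = b ∧ d' = d ∧ g' = g := by
  have image (v : Fin 3 → K) (i : Fin 3) := congrFun (h v) i
  simp only [quadMap, mulVec_diagonal] at image
  obtain rfl : τ = 1 := by simpa [sq, hτ, eq_comm] using image ![1, 0, 0] 0
  have hρω : ρ = ω ^ 2 := by simpa using image ![0, 1, 0] 2
  have hω3 : ω ^ 3 = 1 := by
    have : ω = ρ ^ 2 := by simpa using image ![0, 0, 1] 1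
    exact mul_left_cancel₀ hω (by linear_combination -this - (ρ + ω ^ 2) * hρω)
  have hb : b' = b * (ω * ρ) := by simpa using image ![0, 1, 1] 0
  have hd : ω * d' = d * ω := by simpa using image ![1, 1, 0] 1
  have hg : ρ * g' = g * ρ := by simpa using image ![1, 0, 1] 2
  exact ⟨hω3, rfl, hρω, by rw [hb, hρω, ← pow_succ', hω3, mul_one],
    mul_left_cancel₀ hω (hd.trans (mul_comm _ _)), mul_left_cancel₀ hρ (hg.trans (mul_comm _ _))⟩

theorem eq_diagonal_of_semiconj (hM : IsUnit M)
    (h : Function.Semiconj (M *ᵥ ·) (quadMap b' d' g') (quadMap b d g)) (hb : b ≠ 0)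
    (h01 : M 0 1 = 0) (h02 : M 0 2 = 0) (h21 : M 2 1 = 0) :
    ∃ ω : K, ω ^ 3 = 1 ∧ M = diagonal ![1, ω, ω ^ 2] ∧ b' = b ∧ d' = d ∧ g' = g := by
  have image (v : Fin 3 → K) (i : Fin 3) := congrFun (h v) i
  simp only [quadMap, mulVec, dotProduct, Fin.sum_univ_three] at image
  have h12 : M 1 2 = 0 := by simpa [h01, h21] using image ![0, 1, 0] 1
  have h22 : M 2 2 = M 1 1 ^ 2 := by simpa [h01, h21] using image ![0, 1, 0] 2
  have h11 : M 1 1 = M 2 2 ^ 2 := by simpa [h02, h12] using image ![0, 0, 1] 1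
  obtain ⟨⟨h0, h1⟩, h2⟩ : (M 0 0 ≠ 0 ∧ M 1 1 ≠ 0) ∧ M 2 2 ≠ 0 := by
    have hdet := ((isUnit_iff_isUnit_det M).1 hM).ne_zero
    simpa [det_fin_three, h01, h02, h21, h12] using hdet
  have hb0 : M 0 0 * b' = b * (M 1 1 * M 2 2) := by
    simpa [h01, h02, h12, h21] using image ![0, 1, 1] 0
  have hb1 : b' ≠ 0 :=
    right_ne_zero_of_mul (hb0.trans_ne (mul_ne_zero hb (mul_ne_zero h1 h2)))
  have h10 : M 1 0 = 0 := by simpa [h01, h02, h12, h21, ← h11, hb1] using image ![0, 1, 1] 1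
  have h20 : M 2 0 = 0 := by simpa [h01, h02, h12, h21, ← h22, hb1] using image ![0, 1, 1] 2
  have hdiag : M = diagonal ![M 0 0, M 1 1, M 2 2] := by
    ext i j
    fin_cases i <;> fin_cases j <;> simp [h01, h02, h10, h12, h20, h21]
  rw [hdiag] at h
  obtain ⟨hω, hτ, hρ, hparams⟩ := eq_of_semiconj_diagonal h1 h0 h2 h
  exact ⟨M 1 1, hω, by rwa [hτ, hρ] at hdiag, hparams⟩

theorem eq_diagonal_or_swapMatrix_mul_eq_diagonal [NeZero (2 : K)] [NeZero (3 : K)]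
    (hM : IsUnit M) (h : Function.Semiconj (M *ᵥ ·) (quadMap b' d' g') (quadMap b d g))
    (hb : b ≠ 0) (ht₁ : b * d * g ≠ -1) (ht₈ : b * d * g ≠ 8) :
    (∃ ω : K, ω ^ 3 = 1 ∧ M = diagonal ![1, ω, ω ^ 2] ∧ b' = b ∧ d' = d ∧ g' = g) ∨
      ∃ ω : K, ω ^ 3 = 1 ∧ swapMatrix K * M = diagonal ![1, ω, ω ^ 2] ∧
        b' = b ∧ d' = g ∧ g' = d := by
  obtain ⟨h01, h02⟩ := apply_zero_eq_zero_of_semiconj hM h ht₁ ht₈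
  rcases mul_eq_zero.1 (apply_mul_apply_eq_zero_of_semiconj h hb h01 h02) with h11 | h21
  · right
    refine eq_diagonal_of_semiconj (isUnit_swapMatrix.mul hM)
      (semiconj_mul_mulVec (semiconj_swapMatrix b d g) h) hb ?_ ?_ ?_ <;>
      simpa [swapMatrix, vecMul, dotProduct, Fin.sum_univ_three]
  · exact .inl (eq_diagonal_of_semiconj hM h hb h01 h02 h21)

end Classification

section ProjectiveLinear

variable {K : Type*} [Field K] {A B : Matrix (Fin 3) (Fin 3) K}

theorem toPGL3_coe (M : GL (Fin 3) K) : toPGL3 (M : Matrix (Fin 3) (Fin 3) K) = M :=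
  (dif_pos M.det_ne_zero).trans (congrArg _ (Units.ext rfl))

theorem toPGL3_mul (hA : IsUnit A) (hB : IsUnit B) : toPGL3 (A * B) = toPGL3 A * toPGL3 B := by
  obtain ⟨A, rfl⟩ := hA
  obtain ⟨B, rfl⟩ := hB
  rw [← Units.val_mul, toPGL3_coe, toPGL3_coe, toPGL3_coe, QuotientGroup.mk_mul]

theorem toPGL3_pow (hA : IsUnit A) (k : ℕ) : toPGL3 (A ^ k) = toPGL3 A ^ k := by
  obtain ⟨A, rfl⟩ := hA
  rw [← Units.val_pow_eq_pow_val, toPGL3_coe, toPGL3_coe, QuotientGroup.mk_pow]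

theorem toPGL3_eq_one_iff (hA : IsUnit A) :
    toPGL3 A = 1 ↔ A ∈ Set.range (scalar (Fin 3)) := by
  obtain ⟨A, rfl⟩ := hA
  rw [toPGL3_coe, QuotientGroup.eq_one_iff, GeneralLinearGroup.mem_center_iff_val_mem_range_scalar]

theorem toPGL3_one : toPGL3 (1 : Matrix (Fin 3) (Fin 3) K) = 1 :=
  (toPGL3_eq_one_iff isUnit_one).2 ⟨1, map_one _⟩

theorem toPGL3_smul {c : K} (hc : c ≠ 0) (hA : IsUnit A) : toPGL3 (c • A) = toPGL3 A := by
  have hscalar : IsUnit (scalar (Fin 3) c) := hc.isUnit.map _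
  rw [smul_eq_diagonal_mul, ← scalar_apply, toPGL3_mul hscalar hA,
    (toPGL3_eq_one_iff hscalar).2 ⟨c, rfl⟩, one_mul]

end ProjectiveLinear

section AutomorphismGroup

variable {K : Type*} [Field K] {b d g b' d' g' : K} {M : Matrix (Fin 3) (Fin 3) K} {ζ ω : K}

theorem semiconj_inv_smul {c : K} (hc : c ≠ 0)
    (h : ∀ v, quadMap b d g (M *ᵥ v) = c • (M *ᵥ quadMap b' d' g' v)) :
    Function.Semiconj ((c⁻¹ • M) *ᵥ ·) (quadMap b' d' g') (quadMap b d g) := fun v => by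
  simp only [smul_mulVec, quadMap_smul, h, smul_smul]
  rw [sq, inv_mul_cancel_right₀ hc]

theorem pglConj_quadMap_iff : PGLConj (quadMap b d g) (quadMap b' d' g') ↔
    ∃ M, IsUnit M ∧ Function.Semiconj (M *ᵥ ·) (quadMap b' d' g') (quadMap b d g) := by
  constructor
  · rintro ⟨M, c, hM, hc, h⟩
    exact ⟨c⁻¹ • M, IsUnit.smul (Units.mk0 c hc)⁻¹ ((isUnit_iff_isUnit_det M).2 hM.isUnit),
      semiconj_inv_smul hc h⟩
  · rintro ⟨M, hM, h⟩
    exact ⟨M, 1, ((isUnit_iff_isUnit_det M).1 hM).ne_zero, one_ne_zero, fun v => by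
      rw [one_smul, h.eq]⟩

theorem mem_autQ_quadMap_iff {z : PGL3 K} : z ∈ AutQ (quadMap b d g) ↔
    ∃ M, IsUnit M ∧ toPGL3 M = z ∧
      Function.Semiconj (M *ᵥ ·) (quadMap b d g) (quadMap b d g) := by
  constructor
  · rintro ⟨M, rfl, c, hc, h⟩
    refine ⟨c⁻¹ • M.val, IsUnit.smul (Units.mk0 c hc)⁻¹ M.isUnit, ?_, semiconj_inv_smul hc h⟩
    rw [toPGL3_smul (inv_ne_zero hc) M.isUnit, toPGL3_coe]
  · rintro ⟨_, ⟨M, rfl⟩, rfl, h⟩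
    exact ⟨M, (toPGL3_coe M).symm, 1, one_ne_zero, fun v => by rw [one_smul, h.eq]⟩

theorem isUnit_diagonal_one_sq (hω : ω ≠ 0) : IsUnit (diagonal ![1, ω, ω ^ 2]) := by
  simp [isUnit_diagonal, Pi.isUnit_iff, Fin.forall_fin_succ, hω]

theorem diagonal_pow_one_sq (ω : K) (k : ℕ) :
    diagonal ![1, ω, ω ^ 2] ^ k = diagonal ![1, ω ^ k, (ω ^ k) ^ 2] := by
  rw [diagonal_pow]
  congr 1
  ext i
  fin_cases i <;> simp [pow_right_comm]

theorem toPGL3_swapMatrix_mul_self : toPGL3 (swapMatrix K) * toPGL3 (swapMatrix K) = 1 := by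
  rw [← toPGL3_mul isUnit_swapMatrix isUnit_swapMatrix, swapMatrix_mul_self, toPGL3_one]

theorem orderOf_toPGL3_diagonal (hζ : IsPrimitiveRoot ζ 3) :
    orderOf (toPGL3 (diagonal ![1, ζ, ζ ^ 2])) = 3 := by
  have hunit := isUnit_diagonal_one_sq (hζ.ne_zero (by decide))
  refine orderOf_eq_prime ?_ fun h => ?_
  · rw [← toPGL3_pow hunit, diagonal_pow_one_sq, hζ.pow_eq_one, one_pow, ← toPGL3_one]
    congr
    ext i
    fin_cases i <;> simp
  · obtain ⟨c, hc⟩ := (toPGL3_eq_one_iff hunit).1 h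
    have h0 : c = 1 := by simpa using congrFun₂ hc 0 0
    have h1 : c = ζ := by simpa using congrFun₂ hc 1 1
    exact hζ.ne_one (by decide) (h1.symm.trans h0)

theorem semiconjBy_toPGL3_swapMatrix (hζ : IsPrimitiveRoot ζ 3) :
    SemiconjBy (toPGL3 (swapMatrix K)) (toPGL3 (diagonal ![1, ζ, ζ ^ 2]))
      (toPGL3 (diagonal ![1, ζ, ζ ^ 2]))⁻¹ := by
  have hunit := isUnit_diagonal_one_sq (hζ.ne_zero (by decide))
  rw [SemiconjBy, eq_inv_mul_iff_mul_eq, ← toPGL3_mul isUnit_swapMatrix hunit,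
    ← toPGL3_mul hunit (isUnit_swapMatrix.mul hunit),
    diagonal_mul_swapMatrix_mul_diagonal hζ.pow_eq_one]

theorem mem_zpowers_toPGL3_diagonal_iff (hζ : IsPrimitiveRoot ζ 3) {z : PGL3 K} :
    z ∈ Subgroup.zpowers (toPGL3 (diagonal ![1, ζ, ζ ^ 2])) ↔
      ∃ ω : K, ω ^ 3 = 1 ∧ toPGL3 (diagonal ![1, ω, ω ^ 2]) = z := by
  have hunit := isUnit_diagonal_one_sq (hζ.ne_zero (by decide))
  constructor
  · intro hz
    have hfin : IsOfFinOrder (toPGL3 (diagonal ![1, ζ, ζ ^ 2])) :=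
      orderOf_pos_iff.1 (by rw [orderOf_toPGL3_diagonal hζ]; decide)
    obtain ⟨k, rfl⟩ := hfin.mem_powers_iff_mem_zpowers.2 hz
    refine ⟨ζ ^ k, by rw [pow_right_comm, hζ.pow_eq_one, one_pow], ?_⟩
    rw [← diagonal_pow_one_sq, toPGL3_pow hunit]
  · rintro ⟨ω, hω, rfl⟩
    obtain ⟨k, -, rfl⟩ := hζ.eq_pow_of_pow_eq_one hω
    rw [← diagonal_pow_one_sq, toPGL3_pow hunit]
    exact pow_mem (Subgroup.mem_zpowers _) k

theorem mem_autQ_quadMap_iff_mem_zpowers [NeZero (2 : K)] (hζ : IsPrimitiveRoot ζ 3) (hb : b ≠ 0)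
    (ht₁ : b * d * g ≠ -1) (ht₈ : b * d * g ≠ 8) {z : PGL3 K} : z ∈ AutQ (quadMap b d g) ↔
      z ∈ Subgroup.zpowers (toPGL3 (diagonal ![1, ζ, ζ ^ 2])) ∨ d = g ∧
        toPGL3 (swapMatrix K) * z ∈ Subgroup.zpowers (toPGL3 (diagonal ![1, ζ, ζ ^ 2])) := by
  have : NeZero (3 : K) := by simpa using hζ.neZero'
  rw [mem_autQ_quadMap_iff, mem_zpowers_toPGL3_diagonal_iff hζ, mem_zpowers_toPGL3_diagonal_iff hζ]
  constructor
  · rintro ⟨M, hM, rfl, h⟩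
    rcases eq_diagonal_or_swapMatrix_mul_eq_diagonal hM h hb ht₁ ht₈ with
      ⟨ω, hω, rfl, -⟩ | ⟨ω, hω, hSM, -, hdg, -⟩
    · exact .inl ⟨ω, hω, rfl⟩
    · exact .inr ⟨hdg, ω, hω, by rw [← hSM, toPGL3_mul isUnit_swapMatrix hM]⟩
  · have isUnit_diagonal_root {ω : K} (hω : ω ^ 3 = 1) : IsUnit (diagonal ![1, ω, ω ^ 2]) :=
      isUnit_diagonal_one_sq (IsUnit.of_pow_eq_one hω three_ne_zero).ne_zero
    rintro (⟨ω, hω, rfl⟩ | ⟨rfl, ω, hω, hz⟩)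
    · exact ⟨_, isUnit_diagonal_root hω, rfl, semiconj_diagonal hω b d g⟩
    · refine ⟨_, isUnit_swapMatrix.mul (isUnit_diagonal_root hω), ?_,
        semiconj_mul_mulVec (semiconj_swapMatrix b d d) (semiconj_diagonal hω b d d)⟩
      rw [toPGL3_mul isUnit_swapMatrix (isUnit_diagonal_root hω), hz, ← mul_assoc,
        toPGL3_swapMatrix_mul_self, one_mul]

theorem pglConj_quadMap_iff_eq [NeZero (2 : K)] [NeZero (3 : K)] (hb : b ≠ 0)
    (ht₁ : b * d * g ≠ -1) (ht₈ : b * d * g ≠ 8) :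
    PGLConj (quadMap b d g) (quadMap b' d' g') ↔
      (b' = b ∧ d' = d ∧ g' = g) ∨ (b' = b ∧ d' = g ∧ g' = d) := by
  rw [pglConj_quadMap_iff]
  constructor
  · rintro ⟨M, hM, h⟩
    rcases eq_diagonal_or_swapMatrix_mul_eq_diagonal hM h hb ht₁ ht₈ with
      ⟨-, -, -, hparams⟩ | ⟨-, -, -, hparams⟩
    exacts [.inl hparams, .inr hparams]
  · rintro (⟨rfl, rfl, rfl⟩ | ⟨rfl, rfl, rfl⟩)
    · exact ⟨1, isUnit_one, fun v => by simp only [one_mulVec]⟩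
    · exact ⟨swapMatrix K, isUnit_swapMatrix, semiconj_swapMatrix _ _ _⟩

end AutomorphismGroup

theorem stmt19_general {K : Type*} [Field K] [NeZero (2 : K)] {ζ : K} (hζ : IsPrimitiveRoot ζ 3)
    {b d g : K} (hb : b ≠ 0) (ht₁ : b * d * g ≠ -1) (ht₈ : b * d * g ≠ 8) :
    let H3 : Subgroup (PGL3 K) :=
      Subgroup.closure {toPGL3 (Matrix.diagonal ![1, ζ, ζ ^ 2])}
    let H6 : Subgroup (PGL3 K) :=
      Subgroup.closure {toPGL3 (Matrix.diagonal ![1, ζ, ζ ^ 2]), toPGL3 (swapMatrix K)}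
    (d ≠ g → AutQ (quadMap b d g) = ↑H3 ∧ Nat.card H3 = 3) ∧
    (d = g → AutQ (quadMap b d g) = ↑H6 ∧ Nat.card H6 = 6 ∧
      Nonempty (H6 ≃* Equiv.Perm (Fin 3))) ∧
    ∀ b' d' g' : K, PGLConj (quadMap b d g) (quadMap b' d' g') ↔
      (b' = b ∧ d' = d ∧ g' = g) ∨ (b' = b ∧ d' = g ∧ g' = d) := by
  intro H3 H6
  have : NeZero (3 : K) := by simpa using hζ.neZero'
  have zpowers_eq : Subgroup.zpowers (toPGL3 (diagonal ![1, ζ, ζ ^ 2])) = H3 :=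
    Subgroup.zpowers_eq_closure _
  have order := orderOf_toPGL3_diagonal hζ
  have inverts := semiconjBy_toPGL3_swapMatrix hζ
  have mem_autQ (z : PGL3 K) := mem_autQ_quadMap_iff_mem_zpowers hζ hb ht₁ ht₈ (z := z)
  have dihedral : DihedralGroup 3 ≃* H6 :=
    dihedralMulEquivClosure order (by decide) toPGL3_swapMatrix_mul_self inverts
  refine ⟨fun hdg => ⟨?_, ?_⟩, fun hdg => ⟨?_, ?_, ⟨dihedral.symm.trans dihedralMulEquivPerm⟩⟩,
    fun b' d' g' => pglConj_quadMap_iff_eq hb ht₁ ht₈⟩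
  · ext z
    rw [mem_autQ, SetLike.mem_coe, ← zpowers_eq]
    simp only [hdg, false_and, or_false]
  · rw [← zpowers_eq, Nat.card_zpowers, order]
  · ext z
    rw [mem_autQ, SetLike.mem_coe,
      mem_closure_pair_iff_of_dihedral toPGL3_swapMatrix_mul_self inverts]
    simp only [hdg, true_and]
  · rw [← Nat.card_congr dihedral.toEquiv, DihedralGroup.nat_card]

theorem stmt19 {K : Type*} [Field K] [IsAlgClosed K] [CharZero K]
    (ζ : K) (hζ : IsPrimitiveRoot ζ 3) :
    let f : K → K → K → (Fin 3 → K) → (Fin 3 → K) := fun b d g v =>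
      ![v 0 ^ 2 + b * (v 1 * v 2), v 2 ^ 2 + d * (v 0 * v 1), v 1 ^ 2 + g * (v 0 * v 2)]
    let H3 : Subgroup (PGL3 K) :=
      Subgroup.closure {toPGL3 (Matrix.diagonal ![1, ζ, ζ ^ 2])}
    let H6 : Subgroup (PGL3 K) :=
      Subgroup.closure
        {toPGL3 (Matrix.diagonal ![1, ζ, ζ ^ 2]), toPGL3 !![1,0,0; 0,0,1; 0,1,0]}
    (∀ b d g : K, b ≠ 0 → d ≠ 0 → g ≠ 0 → b * d * g ≠ -1 → b * d * g ≠ 8 → d ≠ g →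
      AutQ (f b d g) = ↑H3 ∧ Nat.card H3 = 3) ∧
    (∀ b d g : K, b ≠ 0 → d ≠ 0 → g ≠ 0 → b * d * g ≠ -1 → b * d * g ≠ 8 → d = g →
      AutQ (f b d g) = ↑H6 ∧ Nat.card H6 = 6 ∧ Nonempty (H6 ≃* Equiv.Perm (Fin 3))) ∧
    (∀ b d g b' d' g' : K, b ≠ 0 → d ≠ 0 → g ≠ 0 → b * d * g ≠ -1 → b * d * g ≠ 8 →
      b' ≠ 0 → d' ≠ 0 → g' ≠ 0 → b' * d' * g' ≠ -1 → b' * d' * g' ≠ 8 →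
      (PGLConj (f b d g) (f b' d' g') ↔
        (b' = b ∧ d' = d ∧ g' = g) ∨ (b' = b ∧ d' = g ∧ g' = d))) := by
  intro f H3 H6
  exact ⟨fun b d g hb _ _ ht₁ ht₈ => (stmt19_general hζ hb ht₁ ht₈).1,
    fun b d g hb _ _ ht₁ ht₈ => (stmt19_general hζ hb ht₁ ht₈).2.1,
    fun b d g b' d' g' hb _ _ ht₁ ht₈ _ _ _ _ _ =>
      (stmt19_general hζ hb ht₁ ht₈).2.2 b' d' g'⟩
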